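/- Suppose γ > 0 and β > 0. Then for all integers n, m with 0 ≤ n < m and every Floquet exponent ξ ∈ (0, 1/2], there exists k > 0 such that ω(n+ξ) = ω(m+ξ), where c₀ = γ/k² + βk² and ω(x) = k²·x·(c₀ − βk²x²) − γ/x. -/

import Mathlib

/-- Dispersion function of the linearized Ostrovsky equation,
with `c₀ = γ/k² + βk²` built in. -/
noncomputable def omega (γ β k x : ℝ) : ℝ :=
  k^2 * x * ((γ/k^2 + β*k^2) - β*k^2*x^2) - γ/x

/-! For nonzero `a ≠ b` the factor `b - a` splits off from `ω(a) - ω(b)`, and what remains is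
affine in `k⁴`. A collision is therefore an equation `k⁴ c = d` with `c` and `d` independent of
`k`, and for `d ≠ 0` it has a positive root exactly when `c` and `d` have the same sign. -/

theorem exists_pos_pow_mul_eq_iff {n : ℕ} (hn : n ≠ 0) {c d : ℝ} (hd : d ≠ 0) :
    (∃ k : ℝ, 0 < k ∧ k ^ n * c = d) ↔ 0 < c * d := by
  constructor
  · rintro ⟨k, hk, rfl⟩
    have hc : c ≠ 0 := right_ne_zero_of_mul hd
    calc 0 < k ^ n * c ^ 2 := by positivity
      _ = c * (k ^ n * c) := by ring
  · intro hcd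
    have hc : c ≠ 0 := left_ne_zero_of_mul hcd.ne'
    have hdc : 0 < d / c := by rwa [div_pos_iff, ← mul_pos_iff, mul_comm]
    refine ⟨(d / c) ^ (n⁻¹ : ℝ), Real.rpow_pos_of_pos hdc _, ?_⟩
    rw [Real.rpow_inv_natCast_pow hdc.le hn, div_mul_cancel₀ _ hc]

theorem one_lt_sq_add_mul_add_sq {a b : ℝ} (ha : 0 < a) (hb : 1 ≤ b) :
    1 < a ^ 2 + a * b + b ^ 2 :=
  calc 1 ≤ b ^ 2 := one_le_pow₀ hb
    _ < a ^ 2 + a * b + b ^ 2 := lt_add_of_pos_left _ (by positivity)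

section Collision

variable {γ β k a b : ℝ}

theorem omega_sub_omega (hk : k ≠ 0) (ha : a ≠ 0) (hb : b ≠ 0) :
    omega γ β k a - omega γ β k b =
      (b - a) * (k ^ 4 * (β * (a ^ 2 + a * b + b ^ 2 - 1)) - γ * (1 + 1 / (a * b))) := by
  unfold omega
  field_simp
  ring

theorem omega_eq_omega_iff (hk : k ≠ 0) (ha : a ≠ 0) (hb : b ≠ 0) (hab : a ≠ b) :
    omega γ β k a = omega γ β k b ↔
      k ^ 4 * (β * (a ^ 2 + a * b + b ^ 2 - 1)) = γ * (1 + 1 / (a * b)) := by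
  rw [← sub_eq_zero, omega_sub_omega hk ha hb, mul_eq_zero_iff_left (sub_ne_zero.mpr hab.symm),
    sub_eq_zero]

theorem exists_omega_eq_omega_iff (hγ : γ ≠ 0) (ha : a ≠ 0) (hb : b ≠ 0) (hab : a ≠ b)
    (hab' : 1 + 1 / (a * b) ≠ 0) :
    (∃ k : ℝ, 0 < k ∧ omega γ β k a = omega γ β k b) ↔
      0 < β * (a ^ 2 + a * b + b ^ 2 - 1) * (γ * (1 + 1 / (a * b))) := by
  rw [← exists_pos_pow_mul_eq_iff four_ne_zero (mul_ne_zero hγ hab')]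
  exact exists_congr fun k ↦ and_congr_right fun hk ↦ omega_eq_omega_iff hk.ne' ha hb hab

theorem nonneg_modes_collision_pos_beta_general (hγβ : 0 < γ * β) (ha : 0 < a) (hb : 0 < b)
    (hab : a ≠ b) :
    (∃ k : ℝ, 0 < k ∧ omega γ β k a = omega γ β k b) ↔ 1 < a ^ 2 + a * b + b ^ 2 := by
  have hγ : γ ≠ 0 := left_ne_zero_of_mul hγβ.ne'
  have hab' : 0 < 1 + 1 / (a * b) := by positivity
  rw [exists_omega_eq_omega_iff hγ ha.ne' hb.ne' hab hab'.ne']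
  calc 0 < β * (a ^ 2 + a * b + b ^ 2 - 1) * (γ * (1 + 1 / (a * b)))
      ↔ 0 < γ * β * (1 + 1 / (a * b)) * (a ^ 2 + a * b + b ^ 2 - 1) := by ring_nf
    _ ↔ 0 < a ^ 2 + a * b + b ^ 2 - 1 := mul_pos_iff_of_pos_left (mul_pos hγβ hab')
    _ ↔ 1 < a ^ 2 + a * b + b ^ 2 := sub_pos

end Collision

theorem nonneg_modes_collision_pos_beta (γ β : ℝ) (hγ : 0 < γ) (hβ : 0 < β) :
    ∀ (n m : ℤ), 0 ≤ n → n < m →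
      ∀ ξ : ℝ, 0 < ξ → ξ ≤ 1/2 →
        ∃ k : ℝ, 0 < k ∧
          omega γ β k ((n : ℝ) + ξ) = omega γ β k ((m : ℝ) + ξ) := by
  intro n m hn hnm ξ hξ _
  have hm : (1 : ℝ) ≤ m := by exact_mod_cast hn.trans_lt hnm
  exact (nonneg_modes_collision_pos_beta_general (mul_pos hγ hβ) (by positivity) (by positivity)
    (by simpa using hnm.ne)).mpr (one_lt_sq_add_mul_add_sq (by positivity) (by linarith))
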